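/- arXiv:2405.07739 — 3 statements merged into one kernel-verified Lean document; each statement's English description precedes it below -/
import Mathlib

section
/- The gradient map G of f is Lipschitz continuous with constant β: for all H₁, H₂ ∈ ℂ^{p×q}, ‖G(H₁) − G(H₂)‖_F ≤ β ‖H₁ − H₂‖_F. Moreover G(H₁) − G(H₂) = β(H₁ − H₂) − β²𝓗(𝓛(𝓗*(H₁ − H₂))). -/
open scoped BigOperators

namespace LPPG

/-- The Hankel operator. -/
noncomputable def hankel (p q n : ℕ) (hn : p + q = n + 1) (x : Fin n → ℂ) :
    Matrix (Fin p) (Fin q) ℂ :=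
  fun i j => x ⟨i.1 + j.1, by have hi := i.2; have hj := j.2; omega⟩

/-- The adjoint `𝓗*` of the Hankel operator. -/
noncomputable def hankelAdj (p q n : ℕ) (X : Matrix (Fin p) (Fin q) ℂ) : Fin n → ℂ :=
  fun a => ∑ i : Fin p, ∑ j : Fin q, if (i : ℕ) + (j : ℕ) = (a : ℕ) then X i j else 0

/-- The antidiagonal count `w_a`. -/
def w (p q : ℕ) (a : ℕ) : ℕ :=
  (Finset.univ.filter (fun ij : Fin p × Fin q => (ij.1 : ℕ) + (ij.2 : ℕ) = a)).card

/-- The sampling operator `𝓟_Ω`. -/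
def projOmega (n : ℕ) (Ω : Finset (Fin n)) (x : Fin n → ℂ) : Fin n → ℂ :=
  fun a => if a ∈ Ω then x a else 0

/-- The entrywise operator `𝓛`. -/
noncomputable def Lop (p q n : ℕ) (α β : ℝ) (Ω : Finset (Fin n)) (x : Fin n → ℂ) : Fin n → ℂ :=
  fun a => x a / ((α : ℂ) + (if a ∈ Ω then 1 else 0) + (β : ℂ) * (w p q (a : ℕ) : ℂ))

/-- Frobenius norm of a complex matrix. -/
noncomputable def frobNorm (p q : ℕ) (A : Matrix (Fin p) (Fin q) ℂ) : ℝ :=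
  Real.sqrt (∑ i : Fin p, ∑ j : Fin q, ‖A i j‖ ^ 2)

/-- The gradient map `G(H) = βH − β𝓗(𝓛(𝓟_Ω s + β𝓗*H))`. -/
noncomputable def Gmap (p q n : ℕ) (hn : p + q = n + 1) (α β : ℝ) (Ω : Finset (Fin n))
    (s : Fin n → ℂ) (H : Matrix (Fin p) (Fin q) ℂ) : Matrix (Fin p) (Fin q) ℂ :=
  β • H - β • hankel p q n hn (Lop p q n α β Ω (projOmega n Ω s + β • hankelAdj p q n H))

/-!
The map `X ↦ X - β 𝓗(𝓛(𝓗* X))` acts on each antidiagonal `i + j = a` separately: from each of its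
`w_a` entries it subtracts `t = β / (α + χ_Ω(a) + β w_a)` times their sum. Subtracting `t` times
their sum from each of `m` vectors does not increase the sum of squared norms as soon as `0 ≤ t` and
`t m ≤ 2`, and here `t w_a ≤ 1`. Hence this map is a contraction in the Frobenius norm, and
`G(H₁) - G(H₂)` is `β` times its value at `H₁ - H₂`.
-/

section FiberSums

variable {ι κ E : Type*} [NormedAddCommGroup E] [InnerProductSpace ℝ E]

lemma sum_norm_sub_smul_sum_sq (S : Finset ι) (f : ι → E) (t : ℝ) :
    ∑ i ∈ S, ‖f i - t • ∑ k ∈ S, f k‖ ^ 2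
      = ∑ i ∈ S, ‖f i‖ ^ 2 - t * (2 - t * S.card) * ‖∑ k ∈ S, f k‖ ^ 2 := by
  set z := ∑ k ∈ S, f k with hz
  have sum_inner_eq : ∑ i ∈ S, inner ℝ (f i) z = ‖z‖ ^ 2 := by
    rw [← sum_inner, ← hz, real_inner_self_eq_norm_sq]
  simp only [norm_sub_sq_real, inner_smul_right, norm_smul, mul_pow, Real.norm_eq_abs, sq_abs,
    Finset.sum_add_distrib, Finset.sum_sub_distrib, Finset.sum_const, nsmul_eq_mul,
    ← Finset.mul_sum, sum_inner_eq]
  ring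

lemma sum_norm_sub_smul_sum_sq_le (S : Finset ι) (f : ι → E) {t : ℝ} (ht : 0 ≤ t)
    (htS : t * S.card ≤ 2) :
    ∑ i ∈ S, ‖f i - t • ∑ k ∈ S, f k‖ ^ 2 ≤ ∑ i ∈ S, ‖f i‖ ^ 2 := by
  rw [sum_norm_sub_smul_sum_sq]
  exact sub_le_self _ (mul_nonneg (mul_nonneg ht (sub_nonneg.2 htS)) (sq_nonneg _))

lemma sum_norm_sub_smul_fiber_sum_sq_le [Fintype ι] [DecidableEq κ] (g : ι → κ)
    (f : ι → E) {t : κ → ℝ} (ht : ∀ a, 0 ≤ t a)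
    (htg : ∀ a, t a * (Finset.univ.filter (g · = a)).card ≤ 2) :
    ∑ i, ‖f i - t (g i) • ∑ k with g k = g i, f k‖ ^ 2 ≤ ∑ i, ‖f i‖ ^ 2 := by
  have maps_to_image : ∀ i ∈ Finset.univ, g i ∈ Finset.univ.image g :=
    fun i hi => Finset.mem_image_of_mem g hi
  rw [← Finset.sum_fiberwise_of_maps_to maps_to_image,
    ← Finset.sum_fiberwise_of_maps_to maps_to_image]
  refine Finset.sum_le_sum fun a _ => ?_
  calc ∑ i with g i = a, ‖f i - t (g i) • ∑ k with g k = g i, f k‖ ^ 2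
      = ∑ i with g i = a, ‖f i - t a • ∑ k with g k = a, f k‖ ^ 2 :=
        Finset.sum_congr rfl fun i hi => by rw [(Finset.mem_filter.1 hi).2]
    _ ≤ ∑ i with g i = a, ‖f i‖ ^ 2 := sum_norm_sub_smul_sum_sq_le _ f (ht a) (htg a)

end FiberSums

section FrobeniusNorm

variable {p q : ℕ}

lemma frobNorm_eq_sqrt_sum_prod (A : Matrix (Fin p) (Fin q) ℂ) :
    frobNorm p q A = √(∑ ij : Fin p × Fin q, ‖A ij.1 ij.2‖ ^ 2) := by
  rw [frobNorm, Fintype.sum_prod_type]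

lemma frobNorm_smul (c : ℝ) (A : Matrix (Fin p) (Fin q) ℂ) :
    frobNorm p q (c • A) = |c| * frobNorm p q A := by
  simp only [frobNorm, Matrix.smul_apply, norm_smul, mul_pow, ← Finset.mul_sum, Real.norm_eq_abs]
  rw [Real.sqrt_mul (sq_nonneg _), Real.sqrt_sq (abs_nonneg c)]

end FrobeniusNorm

section Linearity

variable {p q n : ℕ}

lemma hankel_sub (hn : p + q = n + 1) (x y : Fin n → ℂ) :
    hankel p q n hn (x - y) = hankel p q n hn x - hankel p q n hn y :=
  rfl

lemma hankel_smul (hn : p + q = n + 1) (c : ℝ) (x : Fin n → ℂ) :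
    hankel p q n hn (c • x) = c • hankel p q n hn x :=
  rfl

lemma hankelAdj_sub (X Y : Matrix (Fin p) (Fin q) ℂ) :
    hankelAdj p q n (X - Y) = hankelAdj p q n X - hankelAdj p q n Y := by
  ext a
  simp only [hankelAdj, Matrix.sub_apply, Pi.sub_apply, ← Finset.sum_sub_distrib,
    ite_sub_ite, sub_zero]

lemma Lop_sub (α β : ℝ) (Ω : Finset (Fin n)) (x y : Fin n → ℂ) :
    Lop p q n α β Ω (x - y) = Lop p q n α β Ω x - Lop p q n α β Ω y :=
  funext fun _ => sub_div _ _ _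

lemma Lop_smul (α β : ℝ) (Ω : Finset (Fin n)) (c : ℝ) (x : Fin n → ℂ) :
    Lop p q n α β Ω (c • x) = c • Lop p q n α β Ω x :=
  funext fun _ => smul_div_assoc c _ _

lemma Gmap_sub_Gmap (hn : p + q = n + 1) (α β : ℝ) (Ω : Finset (Fin n)) (s : Fin n → ℂ)
    (H₁ H₂ : Matrix (Fin p) (Fin q) ℂ) :
    Gmap p q n hn α β Ω s H₁ - Gmap p q n hn α β Ω s H₂
      = β • (H₁ - H₂)
        - (β ^ 2) • hankel p q n hn (Lop p q n α β Ω (hankelAdj p q n (H₁ - H₂))) := by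
  rw [Gmap, Gmap, sub_sub_sub_comm, ← smul_sub, ← smul_sub β (hankel _ _ _ _ _), ← hankel_sub,
    ← Lop_sub, add_sub_add_left_eq_sub, ← smul_sub β (hankelAdj _ _ _ _), ← hankelAdj_sub,
    Lop_smul, hankel_smul, smul_smul, sq]

end Linearity

section Contraction

variable {p q n : ℕ} (hn : p + q = n + 1)

/-- The index `i + j` of the antidiagonal through the entry `(i, j)` of a `p × q` matrix, as an
element of `Fin n` with `n = p + q - 1`. Its fibres are the antidiagonals. -/
def antidiagIndex (ij : Fin p × Fin q) : Fin n :=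
  ⟨ij.1 + ij.2, by omega⟩

/-- The denominator `α + χ_Ω(a) + β w_a` of `𝓛`, taken in `ℝ` rather than `ℂ` so that it can be
compared with `β w_a`. -/
def lopDenom (p q : ℕ) (α β : ℝ) (Ω : Finset (Fin n)) (a : Fin n) : ℝ :=
  α + (if a ∈ Ω then 1 else 0) + β * w p q a

lemma hankelAdj_eq_sum_fiber (X : Matrix (Fin p) (Fin q) ℂ) (a : Fin n) :
    hankelAdj p q n X a = ∑ ij with antidiagIndex hn ij = a, X ij.1 ij.2 := by
  simp only [hankelAdj, antidiagIndex, Fin.ext_iff, Finset.sum_filter, Fintype.sum_prod_type]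

lemma w_eq_card_fiber (a : Fin n) :
    w p q a = (Finset.univ.filter (antidiagIndex hn · = a)).card := by
  simp only [w, antidiagIndex, Fin.ext_iff]

lemma smul_Lop_apply (α β c : ℝ) (Ω : Finset (Fin n)) (x : Fin n → ℂ) (a : Fin n) :
    c • Lop p q n α β Ω x a = (c / lopDenom p q α β Ω a) • x a := by
  simp only [Lop, lopDenom, Complex.real_smul]
  push_cast [apply_ite Complex.ofReal]
  ring

variable {α β : ℝ} (Ω : Finset (Fin n))

lemma mul_w_le_lopDenom (hα : 0 ≤ α) (a : Fin n) : β * w p q a ≤ lopDenom p q α β Ω a :=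
  le_add_of_nonneg_left (by positivity)

lemma lopDenom_nonneg (hα : 0 ≤ α) (hβ : 0 ≤ β) (a : Fin n) : 0 ≤ lopDenom p q α β Ω a :=
  (by positivity : 0 ≤ β * w p q a).trans (mul_w_le_lopDenom Ω hα a)

lemma frobNorm_sub_smul_hankel_Lop_hankelAdj_le (hα : 0 ≤ α) (hβ : 0 ≤ β)
    (X : Matrix (Fin p) (Fin q) ℂ) :
    frobNorm p q (X - β • hankel p q n hn (Lop p q n α β Ω (hankelAdj p q n X)))
      ≤ frobNorm p q X := by
  set g : Fin p × Fin q → Fin n := antidiagIndex hn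
  set t : Fin n → ℝ := fun a => β / lopDenom p q α β Ω a
  have entry_eq (ij : Fin p × Fin q) :
      (X - β • hankel p q n hn (Lop p q n α β Ω (hankelAdj p q n X))) ij.1 ij.2
        = X ij.1 ij.2 - t (g ij) • ∑ kl with g kl = g ij, X kl.1 kl.2 := by
    rw [← hankelAdj_eq_sum_fiber, ← smul_Lop_apply]
    rfl
  have t_nonneg (a : Fin n) : 0 ≤ t a := div_nonneg hβ (lopDenom_nonneg Ω hα hβ a)
  have t_mul_card_le (a : Fin n) : t a * (Finset.univ.filter (g · = a)).card ≤ 1 := by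
    rw [← w_eq_card_fiber, div_mul_eq_mul_div]
    exact div_le_one_of_le₀ (mul_w_le_lopDenom Ω hα a) (lopDenom_nonneg Ω hα hβ a)
  simp only [frobNorm_eq_sqrt_sum_prod, entry_eq]
  exact Real.sqrt_le_sqrt <| sum_norm_sub_smul_fiber_sum_sq_le g (fun ij => X ij.1 ij.2) t_nonneg
    fun a => (t_mul_card_le a).trans one_le_two

end Contraction

/-- the gradient map `G` is `β`-Lipschitz in the Frobenius
norm, and `G(H₁) − G(H₂) = β(H₁ − H₂) − β²𝓗(𝓛(𝓗*(H₁ − H₂)))`. -/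
theorem Gmap_lipschitz
    (p q n : ℕ) (hp : 0 < p) (hq : 0 < q) (hn : p + q = n + 1)
    (α β : ℝ) (hα : 0 < α) (hβ : 0 < β) (Ω : Finset (Fin n)) (s : Fin n → ℂ) :
    (∀ H₁ H₂ : Matrix (Fin p) (Fin q) ℂ,
        frobNorm p q (Gmap p q n hn α β Ω s H₁ - Gmap p q n hn α β Ω s H₂)
          ≤ β * frobNorm p q (H₁ - H₂)) ∧
    (∀ H₁ H₂ : Matrix (Fin p) (Fin q) ℂ,
        Gmap p q n hn α β Ω s H₁ - Gmap p q n hn α β Ω s H₂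
          = β • (H₁ - H₂)
            - (β ^ 2) • hankel p q n hn (Lop p q n α β Ω (hankelAdj p q n (H₁ - H₂)))) := by
  refine ⟨fun H₁ H₂ => ?_, Gmap_sub_Gmap hn α β Ω s⟩
  rw [Gmap_sub_Gmap, sq, ← smul_smul, ← smul_sub, frobNorm_smul, abs_of_pos hβ]
  gcongr
  exact frobNorm_sub_smul_hankel_Lop_hankelAdj_le hn Ω hα.le hβ.le (H₁ - H₂)

end LPPG
end

section
/- The partially minimized objective f is coercive with an explicit quadratic lower bound: for every H ∈ ℂ^{p×q}, f(H) ≥ (1/4) · min(β, α/m) · ‖H‖_F², where m := min(p, q). In particular every sublevel set of f is bounded, so the LPPG iterates, whose f-values do not exceed f(H₀), remain in a bounded set. -/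
open scoped BigOperators

namespace LPPG

/-- `h(H, x) = (1/2)‖s − 𝓟_Ω x‖₂² + (β/2)‖H − 𝓗x‖_F² + (α/2)‖x‖₂²`. -/
noncomputable def hfun (p q n : ℕ) (hn : p + q = n + 1) (α β : ℝ) (Ω : Finset (Fin n))
    (s : Fin n → ℂ) (H : Matrix (Fin p) (Fin q) ℂ) (x : Fin n → ℂ) : ℝ :=
  (1 / 2) * ∑ a : Fin n, ‖s a - projOmega n Ω x a‖ ^ 2
    + (β / 2) * ∑ i : Fin p, ∑ j : Fin q, ‖(H - hankel p q n hn x) i j‖ ^ 2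
    + (α / 2) * ∑ a : Fin n, ‖x a‖ ^ 2

/-- `f(H) = min_x h(H,x)`. -/
noncomputable def fobj (p q n : ℕ) (hn : p + q = n + 1) (α β : ℝ) (Ω : Finset (Fin n))
    (s : Fin n → ℂ) (H : Matrix (Fin p) (Fin q) ℂ) : ℝ :=
  ⨅ x : Fin n → ℂ, hfun p q n hn α β Ω s H x

/-!
For every `x`, the parallelogram-type bound `‖H‖² ≤ 2‖H - 𝓗x‖² + 2‖𝓗x‖²` controls `‖H‖_F` by the
two quadratic penalties in `h(H, x)`, once `‖𝓗x‖_F² ≤ min(p, q) ‖x‖₂²` is known. The latter holds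
because no entry of `x` occurs twice in a row of `𝓗x`, nor, by transposition, twice in a column.
The bound is uniform in `x`, so it passes to the infimum.
-/

lemma sum_comp_le_sum_of_injective {ι κ M : Type*} [Fintype ι] [Fintype κ] [AddCommMonoid M]
    [PartialOrder M] [AddLeftMono M] {g : ι → κ} (hg : Function.Injective g) {f : κ → M}
    (hf : ∀ k, 0 ≤ f k) : ∑ i, f (g i) ≤ ∑ k, f k :=
  calc ∑ i, f (g i) = ∑ k ∈ Finset.univ.map ⟨g, hg⟩, f k := by simp
    _ ≤ ∑ k, f k := Finset.sum_le_univ_sum_of_nonneg hf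

section SeminormedAddCommGroup

variable {E : Type*} [SeminormedAddCommGroup E] {α β m r : ℝ}

lemma norm_sq_le_two_mul_norm_sub_sq_add_norm_sq (y z : E) :
    ‖y‖ ^ 2 ≤ 2 * (‖y - z‖ ^ 2 + ‖z‖ ^ 2) :=
  calc ‖y‖ ^ 2 ≤ (‖y - z‖ + ‖z‖) ^ 2 := by gcongr; exact norm_le_norm_sub_add y z
    _ ≤ 2 * (‖y - z‖ ^ 2 + ‖z‖ ^ 2) := add_sq_le

lemma min_mul_norm_sq_le_norm_sub_sq_add (hα : 0 ≤ α) (hβ : 0 ≤ β) (hm : 0 < m) (y : E) {z : E}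
    (hz : ‖z‖ ^ 2 ≤ m * r) :
    1 / 4 * min β (α / m) * ‖y‖ ^ 2 ≤ β / 2 * ‖y - z‖ ^ 2 + α / 2 * r := by
  have hr : 0 ≤ r := nonneg_of_mul_nonneg_right ((sq_nonneg _).trans hz) hm
  have hcβ : min β (α / m) ≤ β := min_le_left _ _
  have hcα : min β (α / m) * m ≤ α := (le_div_iff₀ hm).1 (min_le_right _ _)
  calc 1 / 4 * min β (α / m) * ‖y‖ ^ 2
      ≤ 1 / 4 * min β (α / m) * (2 * (‖y - z‖ ^ 2 + m * r)) := by
        grw [norm_sq_le_two_mul_norm_sub_sq_add_norm_sq y z, hz]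
    _ = min β (α / m) / 2 * ‖y - z‖ ^ 2 + min β (α / m) * m / 2 * r := by ring
    _ ≤ β / 2 * ‖y - z‖ ^ 2 + α / 2 * r := by gcongr

end SeminormedAddCommGroup

open scoped Matrix Matrix.Norms.Frobenius

lemma frobenius_norm_sq {ι κ E : Type*} [Fintype ι] [Fintype κ] [SeminormedAddCommGroup E]
    (A : Matrix ι κ E) : ‖A‖ ^ 2 = ∑ i, ∑ j, ‖A i j‖ ^ 2 := by
  simp only [Matrix.frobenius_norm_def, ← Real.sqrt_eq_rpow, Real.rpow_two]
  exact Real.sq_sqrt (by positivity)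

section Hankel

variable {p q n : ℕ} (hn : p + q = n + 1) (x : Fin n → ℂ)

lemma hankel_transpose :
    (hankel p q n hn x)ᵀ = hankel q p n ((add_comm q p).trans hn) x := by
  ext i j
  simp only [Matrix.transpose_apply, hankel, add_comm]

lemma sum_norm_sq_hankel_row_le (i : Fin p) :
    ∑ j, ‖hankel p q n hn x i j‖ ^ 2 ≤ ∑ a, ‖x a‖ ^ 2 := by
  have row_injective : Function.Injective fun j : Fin q => (⟨i + j, by omega⟩ : Fin n) :=
    fun j k hjk => by simpa [Fin.ext_iff] using hjk
  exact sum_comp_le_sum_of_injective row_injective (f := fun a => ‖x a‖ ^ 2) fun a => sq_nonneg _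

lemma norm_sq_hankel_le_rows_mul :
    ‖hankel p q n hn x‖ ^ 2 ≤ p * ∑ a, ‖x a‖ ^ 2 :=
  calc ‖hankel p q n hn x‖ ^ 2 = ∑ i, ∑ j, ‖hankel p q n hn x i j‖ ^ 2 := frobenius_norm_sq _
    _ ≤ ∑ _i : Fin p, ∑ a, ‖x a‖ ^ 2 :=
        Finset.sum_le_sum fun i _ => sum_norm_sq_hankel_row_le hn x i
    _ = p * ∑ a, ‖x a‖ ^ 2 := by simp

lemma norm_sq_hankel_le_cols_mul :
    ‖hankel p q n hn x‖ ^ 2 ≤ q * ∑ a, ‖x a‖ ^ 2 := by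
  rw [← Matrix.frobenius_norm_transpose, hankel_transpose]
  exact norm_sq_hankel_le_rows_mul _ x

lemma norm_sq_hankel_le_min_mul :
    ‖hankel p q n hn x‖ ^ 2 ≤ min (p : ℝ) q * ∑ a, ‖x a‖ ^ 2 := by
  rw [min_mul_of_nonneg _ _ (by positivity)]
  exact le_min (norm_sq_hankel_le_rows_mul hn x) (norm_sq_hankel_le_cols_mul hn x)

variable (α β : ℝ) (Ω : Finset (Fin n)) (s : Fin n → ℂ) (H : Matrix (Fin p) (Fin q) ℂ)

lemma norm_sub_hankel_sq_add_le_hfun :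
    β / 2 * ‖H - hankel p q n hn x‖ ^ 2 + α / 2 * ∑ a, ‖x a‖ ^ 2 ≤ hfun p q n hn α β Ω s H x := by
  have data_fit_nonneg : 0 ≤ 1 / 2 * ∑ a, ‖s a - projOmega n Ω x a‖ ^ 2 := by positivity
  rw [hfun, ← frobenius_norm_sq]
  linarith

end Hankel

/-- coercivity of the partially minimized objective:
`f(H) ≥ (1/4)·min(β, α/m)·‖H‖_F²` for every `H`, where `m = min(p,q)`. -/
theorem fobj_coercive
    (p q n : ℕ) (hp : 0 < p) (hq : 0 < q) (hn : p + q = n + 1)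
    (α β : ℝ) (hα : 0 < α) (hβ : 0 < β) (Ω : Finset (Fin n)) (s : Fin n → ℂ) :
    ∀ H : Matrix (Fin p) (Fin q) ℂ,
      (1 / 4) * min β (α / (min p q : ℝ)) * ∑ i : Fin p, ∑ j : Fin q, ‖H i j‖ ^ 2
        ≤ fobj p q n hn α β Ω s H := by
  intro H
  have hm : 0 < min (p : ℝ) q := lt_min (Nat.cast_pos.2 hp) (Nat.cast_pos.2 hq)
  refine le_ciInf fun x => ?_
  rw [← frobenius_norm_sq]
  calc 1 / 4 * min β (α / min (p : ℝ) q) * ‖H‖ ^ 2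
      ≤ β / 2 * ‖H - hankel p q n hn x‖ ^ 2 + α / 2 * ∑ a, ‖x a‖ ^ 2 :=
        min_mul_norm_sq_le_norm_sub_sq_add hα.le hβ.le hm H (norm_sq_hankel_le_min_mul hn x)
    _ ≤ hfun p q n hn α β Ω s H x := norm_sub_hankel_sq_add_le_hfun hn x α β Ω s H

end LPPG
end

section
/- Let f(H) = min_{x∈ℂⁿ} h(H,x) be the partially minimized objective with gradient map G, and take step size γ = 1/β. Let S be the set of matrices in ℂ^{p×q} of rank at most r. If Y ∈ S and H⁺ ∈ S minimizes over S the proximal model u ↦ Re tr(G(Y)ᴴ(u − Y)) + (β/2)‖u − Y‖_F², then the exact decrease inequality holds: f(H⁺) ≤ f(Y) − (1/2) Re tr(Dᴴ · β²𝓗(𝓛(𝓗*D))), where D := H⁺ − Y; in particular f(H⁺) ≤ f(Y). -/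
open scoped BigOperators

namespace LPPG

/-- Real Frobenius inner product `Re tr(Aᴴ B)`. -/
noncomputable def frobInner (p q : ℕ) (A B : Matrix (Fin p) (Fin q) ℂ) : ℝ :=
  (∑ i : Fin p, ∑ j : Fin q, (starRingEnd ℂ) (A i j) * B i j).re

/-!
Since `𝓗*𝓗` is the diagonal operator of the counts `w_a`, completing the square in `x` shows that
`h(H, ·)` is minimized at `𝓛(𝓟_Ω s + β𝓗*H)` and that `f` is a quadratic function of `H`. Its exact
second-order expansion is
`f(Y + D) = f(Y) + Re tr(G(Y)ᴴ D) + (β/2)‖D‖² − (1/2) Re tr(Dᴴ β²𝓗𝓛𝓗*D)`,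
so `f(H⁺) − f(Y)` is the value of the proximal model at `H⁺` minus a nonnegative quadratic form, and
the model value at `H⁺` is at most its value `0` at the competitor `Y`.
-/

open scoped RealInnerProductSpace

theorem half_mul_norm_sub_inv_smul_sq {E : Type*} [NormedAddCommGroup E] [InnerProductSpace ℝ E]
    {c : ℝ} (hc : c ≠ 0) (b x : E) :
    c / 2 * ‖x - c⁻¹ • b‖ ^ 2 = c / 2 * ‖x‖ ^ 2 - ⟪b, x⟫ + 1 / 2 * (‖b‖ ^ 2 / c) := by
  rw [norm_sub_sq_real, inner_smul_right, norm_smul, mul_pow, Real.norm_eq_abs, sq_abs,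
    real_inner_comm]
  field_simp

section Frobenius

variable {p q : ℕ}

theorem frobInner_eq_sum_inner (A B : Matrix (Fin p) (Fin q) ℂ) :
    frobInner p q A B = ∑ i, ∑ j, ⟪A i j, B i j⟫ := by
  simp only [frobInner, Complex.re_sum, Complex.inner, mul_comm]

theorem frobInner_comm (A B : Matrix (Fin p) (Fin q) ℂ) :
    frobInner p q A B = frobInner p q B A := by
  simp only [frobInner_eq_sum_inner, real_inner_comm]

theorem frobInner_sub_left (A B C : Matrix (Fin p) (Fin q) ℂ) :
    frobInner p q (A - B) C = frobInner p q A C - frobInner p q B C := by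
  simp only [frobInner_eq_sum_inner, Matrix.sub_apply, inner_sub_left, Finset.sum_sub_distrib]

theorem frobInner_smul_right (t : ℝ) (A B : Matrix (Fin p) (Fin q) ℂ) :
    frobInner p q A (t • B) = t * frobInner p q A B := by
  simp only [frobInner_eq_sum_inner, Matrix.smul_apply, real_inner_smul_right, Finset.mul_sum]

theorem frobInner_smul_left (t : ℝ) (A B : Matrix (Fin p) (Fin q) ℂ) :
    frobInner p q (t • A) B = t * frobInner p q A B := by
  rw [frobInner_comm, frobInner_smul_right, frobInner_comm]

theorem sum_norm_add_sq (A B : Matrix (Fin p) (Fin q) ℂ) :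
    ∑ i, ∑ j, ‖(A + B) i j‖ ^ 2
      = ∑ i, ∑ j, ‖A i j‖ ^ 2 + 2 * frobInner p q A B + ∑ i, ∑ j, ‖B i j‖ ^ 2 := by
  simp only [frobInner_eq_sum_inner, Matrix.add_apply, norm_add_sq_real, Finset.sum_add_distrib,
    Finset.mul_sum]

theorem sum_norm_sub_sq (A B : Matrix (Fin p) (Fin q) ℂ) :
    ∑ i, ∑ j, ‖(A - B) i j‖ ^ 2
      = ∑ i, ∑ j, ‖A i j‖ ^ 2 - 2 * frobInner p q A B + ∑ i, ∑ j, ‖B i j‖ ^ 2 := by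
  simp only [frobInner_eq_sum_inner, Matrix.sub_apply, norm_sub_sq_real, Finset.sum_add_distrib,
    Finset.sum_sub_distrib, Finset.mul_sum]

end Frobenius

section Hankel

variable {p q n : ℕ} (hn : p + q = n + 1)

theorem sum_antidiagonal_fiberwise {M : Type*} [AddCommMonoid M] (g : Fin p → Fin q → Fin n → M) :
    ∑ i : Fin p, ∑ j : Fin q, g i j ⟨i + j, by omega⟩
      = ∑ a : Fin n, ∑ i : Fin p, ∑ j : Fin q, if (i : ℕ) + j = a then g i j a else 0 := by
  symm
  rw [Finset.sum_comm]
  refine Finset.sum_congr rfl fun i _ => ?_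
  rw [Finset.sum_comm]
  refine Finset.sum_congr rfl fun j _ => ?_
  rw [Finset.sum_eq_single_of_mem ⟨i + j, by omega⟩ (Finset.mem_univ _)]
  · exact if_pos rfl
  · exact fun a _ ha => if_neg fun h => ha (Fin.ext h.symm)

theorem frobInner_hankel (X : Matrix (Fin p) (Fin q) ℂ) (x : Fin n → ℂ) :
    frobInner p q X (hankel p q n hn x) = ∑ a, ⟪hankelAdj p q n X a, x a⟫ := by
  simp only [frobInner_eq_sum_inner, hankel, hankelAdj, sum_inner,
    sum_antidiagonal_fiberwise hn fun i j a => ⟪X i j, x a⟫]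
  refine Finset.sum_congr rfl fun a _ => Finset.sum_congr rfl fun i _ =>
    Finset.sum_congr rfl fun j _ => ?_
  split_ifs
  · rfl
  · exact (inner_zero_left _).symm

theorem sum_norm_hankel_sq (x : Fin n → ℂ) :
    ∑ i, ∑ j, ‖hankel p q n hn x i j‖ ^ 2 = ∑ a : Fin n, w p q a * ‖x a‖ ^ 2 := by
  simp only [hankel, sum_antidiagonal_fiberwise hn fun _ _ a => ‖x a‖ ^ 2, w,
    Finset.card_filter, Fintype.sum_prod_type, Nat.cast_sum, Nat.cast_ite, Nat.cast_one,
    Nat.cast_zero, Finset.sum_mul, ite_mul, one_mul, zero_mul]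

theorem hankelAdj_add (A B : Matrix (Fin p) (Fin q) ℂ) :
    hankelAdj p q n (A + B) = hankelAdj p q n A + hankelAdj p q n B := by
  ext a
  simp only [hankelAdj, Matrix.add_apply, Pi.add_apply, ← Finset.sum_add_distrib, ite_add_zero]

end Hankel

/-- The diagonal entries `α + χ_Ω(a) + β w_a` of the normal operator `αI + 𝓟_Ω + β𝓗*𝓗`, which `𝓛`
inverts; they are kept real so that their sign can be discussed. -/
noncomputable def normalWeight (p q n : ℕ) (α β : ℝ) (Ω : Finset (Fin n)) (a : Fin n) : ℝ :=
  α + (if a ∈ Ω then 1 else 0) + β * w p q a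

/-- The right-hand side `𝓟_Ω s + β𝓗*H` of the normal equations of `h(H, ·)`; applying `𝓛` to it
gives the minimizing `x`. -/
noncomputable def normalRHS (p q n : ℕ) (β : ℝ) (Ω : Finset (Fin n)) (s : Fin n → ℂ)
    (H : Matrix (Fin p) (Fin q) ℂ) : Fin n → ℂ :=
  projOmega n Ω s + β • hankelAdj p q n H

section Objective

variable {p q n : ℕ} (hn : p + q = n + 1) {α β : ℝ} (Ω : Finset (Fin n)) (s : Fin n → ℂ)

theorem normalWeight_pos (hα : 0 < α) (hβ : 0 ≤ β) (a : Fin n) :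
    0 < normalWeight p q n α β Ω a := by
  unfold normalWeight
  split_ifs <;> positivity

theorem Lop_apply_eq_inv_smul (x : Fin n → ℂ) (a : Fin n) :
    Lop p q n α β Ω x a = (normalWeight p q n α β Ω a)⁻¹ • x a := by
  rw [Lop, normalWeight, Complex.real_smul, div_eq_inv_mul]
  split_ifs <;> push_cast <;> rfl

theorem frobInner_hankel_Lop (D : Matrix (Fin p) (Fin q) ℂ) (x : Fin n → ℂ) :
    frobInner p q D (hankel p q n hn (Lop p q n α β Ω x))
      = ∑ a, ⟪hankelAdj p q n D a, x a⟫ / normalWeight p q n α β Ω a := by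
  simp only [frobInner_hankel, Lop_apply_eq_inv_smul, real_inner_smul_right, div_eq_inv_mul]

theorem frobInner_smul_hankel_Lop_hankelAdj (D : Matrix (Fin p) (Fin q) ℂ) :
    frobInner p q D (β ^ 2 • hankel p q n hn (Lop p q n α β Ω (hankelAdj p q n D)))
      = β ^ 2 * ∑ a, ‖hankelAdj p q n D a‖ ^ 2 / normalWeight p q n α β Ω a := by
  simp only [frobInner_smul_right, frobInner_hankel_Lop, real_inner_self_eq_norm_sq]

theorem frobInner_Gmap (Y D : Matrix (Fin p) (Fin q) ℂ) :
    frobInner p q (Gmap p q n hn α β Ω s Y) D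
      = β * frobInner p q Y D
        - β * ∑ a, ⟪hankelAdj p q n D a, normalRHS p q n β Ω s Y a⟫
            / normalWeight p q n α β Ω a := by
  rw [Gmap, frobInner_sub_left, frobInner_smul_left, frobInner_smul_left,
    frobInner_comm (hankel _ _ _ _ _), frobInner_hankel_Lop, normalRHS]

theorem norm_sub_projOmega_sq (x : Fin n → ℂ) (a : Fin n) :
    ‖s a - projOmega n Ω x a‖ ^ 2
      = ‖s a‖ ^ 2 - 2 * ⟪projOmega n Ω s a, x a⟫ + (if a ∈ Ω then 1 else 0) * ‖x a‖ ^ 2 := by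
  by_cases ha : a ∈ Ω <;> simp [projOmega, ha, norm_sub_sq_real]

theorem hfun_eq_quadratic (H : Matrix (Fin p) (Fin q) ℂ) (x : Fin n → ℂ) :
    hfun p q n hn α β Ω s H x
      = β / 2 * ∑ i, ∑ j, ‖H i j‖ ^ 2 + 1 / 2 * ∑ a, ‖s a‖ ^ 2
        + ∑ a, (normalWeight p q n α β Ω a / 2 * ‖x a‖ ^ 2 - ⟪normalRHS p q n β Ω s H a, x a⟫) := by
  have collect_diagonal (a : Fin n) :
      normalWeight p q n α β Ω a / 2 * ‖x a‖ ^ 2 - ⟪normalRHS p q n β Ω s H a, x a⟫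
        = 1 / 2 * ‖s a - projOmega n Ω x a‖ ^ 2 - 1 / 2 * ‖s a‖ ^ 2
          - β * ⟪hankelAdj p q n H a, x a⟫ + β / 2 * (w p q a * ‖x a‖ ^ 2)
          + α / 2 * ‖x a‖ ^ 2 := by
    rw [norm_sub_projOmega_sq, normalWeight, normalRHS, Pi.add_apply, Pi.smul_apply,
      inner_add_left, real_inner_smul_left]
    ring
  simp only [hfun, sum_norm_sub_sq, frobInner_hankel, sum_norm_hankel_sq, collect_diagonal,
    Finset.sum_add_distrib, Finset.sum_sub_distrib, ← Finset.mul_sum]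
  ring

/-- The closed form of `f(H)`: the constant left in `h(H, x)` after completing the square in `x`. -/
noncomputable def minValue (p q n : ℕ) (α β : ℝ) (Ω : Finset (Fin n)) (s : Fin n → ℂ)
    (H : Matrix (Fin p) (Fin q) ℂ) : ℝ :=
  β / 2 * ∑ i, ∑ j, ‖H i j‖ ^ 2 + 1 / 2 * ∑ a, ‖s a‖ ^ 2
    - 1 / 2 * ∑ a, ‖normalRHS p q n β Ω s H a‖ ^ 2 / normalWeight p q n α β Ω a

theorem minValue_add (Y D : Matrix (Fin p) (Fin q) ℂ) :
    minValue p q n α β Ω s (Y + D)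
      = minValue p q n α β Ω s Y + frobInner p q (Gmap p q n hn α β Ω s Y) D
        + β / 2 * ∑ i, ∑ j, ‖D i j‖ ^ 2
        - 1 / 2 * frobInner p q D
            (β ^ 2 • hankel p q n hn (Lop p q n α β Ω (hankelAdj p q n D))) := by
  have expand_diagonal (a : Fin n) :
      ‖normalRHS p q n β Ω s (Y + D) a‖ ^ 2 / normalWeight p q n α β Ω a
        = ‖normalRHS p q n β Ω s Y a‖ ^ 2 / normalWeight p q n α β Ω a
          + 2 * β * (⟪hankelAdj p q n D a, normalRHS p q n β Ω s Y a⟫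
              / normalWeight p q n α β Ω a)
          + β ^ 2 * (‖hankelAdj p q n D a‖ ^ 2 / normalWeight p q n α β Ω a) := by
    have rhs_add : normalRHS p q n β Ω s (Y + D) a
        = normalRHS p q n β Ω s Y a + β • hankelAdj p q n D a := by
      simp only [normalRHS, hankelAdj_add, smul_add, Pi.add_apply, Pi.smul_apply, add_assoc]
    rw [rhs_add, norm_add_sq_real, real_inner_smul_right, real_inner_comm, norm_smul, mul_pow,
      Real.norm_eq_abs, sq_abs]
    ring
  simp only [minValue, sum_norm_add_sq, frobInner_Gmap, frobInner_smul_hankel_Lop_hankelAdj,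
    expand_diagonal, Finset.sum_add_distrib, ← Finset.mul_sum]
  ring

variable {Ω}

theorem hfun_eq_minValue_add_sum_norm_sub_sq
    (hweight : ∀ a, normalWeight p q n α β Ω a ≠ 0)
    (H : Matrix (Fin p) (Fin q) ℂ) (x : Fin n → ℂ) :
    hfun p q n hn α β Ω s H x
      = minValue p q n α β Ω s H
        + ∑ a, normalWeight p q n α β Ω a / 2
            * ‖x a - Lop p q n α β Ω (normalRHS p q n β Ω s H) a‖ ^ 2 := by
  simp only [hfun_eq_quadratic, minValue, Lop_apply_eq_inv_smul,
    half_mul_norm_sub_inv_smul_sq (hweight _), Finset.sum_add_distrib, ← Finset.mul_sum]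
  ring

theorem isLeast_range_hfun_minValue
    (hweight : ∀ a, 0 < normalWeight p q n α β Ω a)
    (H : Matrix (Fin p) (Fin q) ℂ) :
    IsLeast (Set.range (hfun p q n hn α β Ω s H)) (minValue p q n α β Ω s H) := by
  refine ⟨⟨Lop p q n α β Ω (normalRHS p q n β Ω s H), ?_⟩, Set.forall_mem_range.2 fun x => ?_⟩
  · simp [hfun_eq_minValue_add_sum_norm_sub_sq hn s fun a => (hweight a).ne']
  · rw [hfun_eq_minValue_add_sum_norm_sub_sq hn s fun a => (hweight a).ne']
    exact le_add_of_nonneg_right <| Finset.sum_nonneg fun a _ =>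
      mul_nonneg (half_pos (hweight a)).le (sq_nonneg _)

theorem fobj_eq_minValue
    (hweight : ∀ a, 0 < normalWeight p q n α β Ω a)
    (H : Matrix (Fin p) (Fin q) ℂ) :
    fobj p q n hn α β Ω s H = minValue p q n α β Ω s H :=
  (isLeast_range_hfun_minValue hn s hweight H).csInf_eq

theorem fobj_add
    (hweight : ∀ a, 0 < normalWeight p q n α β Ω a)
    (Y D : Matrix (Fin p) (Fin q) ℂ) :
    fobj p q n hn α β Ω s (Y + D)
      = fobj p q n hn α β Ω s Y + frobInner p q (Gmap p q n hn α β Ω s Y) D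
        + β / 2 * ∑ i, ∑ j, ‖D i j‖ ^ 2
        - 1 / 2 * frobInner p q D
            (β ^ 2 • hankel p q n hn (Lop p q n α β Ω (hankelAdj p q n D))) := by
  rw [fobj_eq_minValue hn s hweight, fobj_eq_minValue hn s hweight, minValue_add hn]

theorem frobInner_smul_hankel_Lop_hankelAdj_nonneg
    (hweight : ∀ a, 0 ≤ normalWeight p q n α β Ω a)
    (D : Matrix (Fin p) (Fin q) ℂ) :
    0 ≤ frobInner p q D (β ^ 2 • hankel p q n hn (Lop p q n α β Ω (hankelAdj p q n D))) := by
  rw [frobInner_smul_hankel_Lop_hankelAdj]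
  exact mul_nonneg (sq_nonneg β) <| Finset.sum_nonneg fun a _ =>
    div_nonneg (sq_nonneg _) (hweight a)

theorem modified_pg_exact_decrease_general
    (hweight : ∀ a, 0 < normalWeight p q n α β Ω a)
    (Y Hp : Matrix (Fin p) (Fin q) ℂ)
    (hmodel : frobInner p q (Gmap p q n hn α β Ω s Y) (Hp - Y)
      + β / 2 * ∑ i, ∑ j, ‖(Hp - Y) i j‖ ^ 2 ≤ 0) :
    fobj p q n hn α β Ω s Hp
        ≤ fobj p q n hn α β Ω s Y
          - 1 / 2 * frobInner p q (Hp - Y)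
              (β ^ 2 • hankel p q n hn (Lop p q n α β Ω (hankelAdj p q n (Hp - Y)))) ∧
    fobj p q n hn α β Ω s Hp ≤ fobj p q n hn α β Ω s Y := by
  have expansion := fobj_add hn s hweight Y (Hp - Y)
  rw [add_sub_cancel] at expansion
  have curvature_nonneg :=
    frobInner_smul_hankel_Lop_hankelAdj_nonneg hn (fun a => (hweight a).le) (Hp - Y)
  constructor <;> linarith

end Objective

/-- exact decrease of the modified proximal gradient step with
step size `γ = 1/β`: if `Y` and `H⁺` have rank at most `r` and `H⁺` minimizes
the proximal model `u ↦ Re tr(G(Y)ᴴ(u − Y)) + (β/2)‖u − Y‖_F²` over the set of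
matrices of rank at most `r`, then with `D = H⁺ − Y`,
`f(H⁺) ≤ f(Y) − (1/2) Re tr(Dᴴ β²𝓗(𝓛(𝓗*D)))`; in particular `f(H⁺) ≤ f(Y)`. -/
theorem modified_pg_exact_decrease
    (p q n r : ℕ) (hp : 0 < p) (hq : 0 < q) (hn : p + q = n + 1)
    (α β : ℝ) (hα : 0 < α) (hβ : 0 < β) (Ω : Finset (Fin n)) (s : Fin n → ℂ)
    (Y Hp : Matrix (Fin p) (Fin q) ℂ)
    (hY : Y.rank ≤ r) (hHp : Hp.rank ≤ r)
    (hmin : ∀ u : Matrix (Fin p) (Fin q) ℂ, u.rank ≤ r →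
        frobInner p q (Gmap p q n hn α β Ω s Y) (Hp - Y)
            + (β / 2) * ∑ i : Fin p, ∑ j : Fin q, ‖(Hp - Y) i j‖ ^ 2
          ≤ frobInner p q (Gmap p q n hn α β Ω s Y) (u - Y)
            + (β / 2) * ∑ i : Fin p, ∑ j : Fin q, ‖(u - Y) i j‖ ^ 2) :
    fobj p q n hn α β Ω s Hp
        ≤ fobj p q n hn α β Ω s Y
          - (1 / 2) * frobInner p q (Hp - Y)
              ((β ^ 2) • hankel p q n hn (Lop p q n α β Ω (hankelAdj p q n (Hp - Y)))) ∧
    fobj p q n hn α β Ω s Hp ≤ fobj p q n hn α β Ω s Y := by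
  exact modified_pg_exact_decrease_general hn s (normalWeight_pos Ω hα hβ.le) Y Hp
    (by simpa [frobInner] using hmin Y hY)

end LPPG
end
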